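/- arXiv:2304.06432 — 2 statements merged into one kernel-verified Lean document; each statement's English description precedes it below -/
import Mathlib

section
/- A word α over a linearly ordered alphabet X is a Lyndon word if and only if α is a single letter or α = βγ for some Lyndon words β, γ with β ≺ γ. Moreover, if α is a Lyndon word of length at least 2 and α = βγ where γ is the longest proper suffix of α that is a Lyndon word, then β is a Lyndon word and β ≺ α ≺ γ. -/
/-- A nonempty word over a linearly ordered alphabet is a Lyndon word if it is
strictly lexicographically smaller than every nontrivial rotation of itself
(vacuously true for single letters). -/
def IsLyndon {X : Type*} [LinearOrder X] (w : List X) : Prop :=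
  w ≠ [] ∧ ∀ u v : List X, u ≠ [] → v ≠ [] → w = u ++ v → List.Lex (· < ·) w (v ++ u)

/-!
A word is compared with its nonempty proper suffixes instead of its rotations: the two conditions
agree because no such suffix of a Lyndon word is also a prefix of it. If `β ≺ γ` are Lyndon words,
then `βγ ≺ γ`, so `βγ` lies below all of its proper suffixes. Conversely, let `γ` be the longest
Lyndon proper suffix of a Lyndon word `βγ`. A Lyndon suffix `δ` of `β` with `δ ≺ γ`, `δ ≠ β`, would
make `δγ` a longer one, so `β ≺ βγ ≺ γ ≼ δ`, and it is enough to compare `β` with its Lyndon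
suffixes because every nonempty word has a Lyndon suffix that does not exceed it.
-/

section Lex

variable {X : Type*}

theorem exists_eq_append_or_lex_append {r : X → X → Prop} {a b : List X} (h : List.Lex r a b) :
    (∃ t, t ≠ [] ∧ b = a ++ t) ∨ ∀ c d, List.Lex r (a ++ c) (b ++ d) := by
  induction h with
  | @nil x l => exact .inl ⟨x :: l, List.cons_ne_nil x l, rfl⟩
  | cons _ ih =>
    rcases ih with ⟨t, ht, rfl⟩ | happend
    · exact .inl ⟨t, ht, rfl⟩
    · exact .inr fun c d => .cons (happend c d)
  | rel hxy => exact .inr fun _ _ => .rel hxy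

theorem lex_append_of_length_le {r : X → X → Prop} {a b : List X} (h : List.Lex r a b)
    (hlen : b.length ≤ a.length) (c d : List X) : List.Lex r (a ++ c) (b ++ d) := by
  refine (exists_eq_append_or_lex_append h).resolve_left ?_ c d
  rintro ⟨t, ht, rfl⟩
  have := List.length_pos_iff.mpr ht
  rw [List.length_append] at hlen
  omega

theorem append_lt_append_left_iff [LinearOrder X] (s : List X) {a b : List X} :
    s ++ a < s ++ b ↔ a < b :=
  (show StrictMono (s ++ ·) from fun _ _ => List.append_left_lt).lt_iff_lt

theorem lt_append_of_ne_nil [LT X] (a : List X) {t : List X} (ht : t ≠ []) : a < a ++ t := by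
  obtain ⟨x, l, rfl⟩ := List.exists_cons_of_ne_nil ht
  simpa only [List.append_nil] using List.append_left_lt (l₁ := a) (List.nil_lt_cons x l)

end Lex

section Lyndon

variable {X : Type*} [LinearOrder X] {u v w β γ : List X}

theorem isLyndon_singleton (x : X) : IsLyndon [x] := by
  refine ⟨List.cons_ne_nil x [], fun u v hu hv huv => ?_⟩
  rcases List.singleton_eq_append_iff.mp huv with ⟨rfl, -⟩ | ⟨-, rfl⟩ <;> contradiction

theorem IsLyndon.suffix_not_isPrefix (h : IsLyndon (u ++ v)) (hu : u ≠ []) (hv : v ≠ []) :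
    ¬ v <+: u ++ v := by
  rintro ⟨t, ht⟩
  have hlen : t.length = u.length := by
    have := congrArg List.length ht
    simp only [List.length_append] at this
    omega
  have ht_ne : t ≠ [] := List.ne_nil_of_length_pos (hlen ▸ List.length_pos_iff.mpr hu)
  have htu : t < u := by
    have hrot : u ++ v < v ++ u := h.2 u v hu hv rfl
    rwa [← ht, append_lt_append_left_iff] at hrot
  have hrot : u ++ v < t ++ v := h.2 v t hv ht_ne ht.symm
  exact lt_asymm hrot (lex_append_of_length_le htu hlen.ge v v)

theorem IsLyndon.lt_suffix (h : IsLyndon (u ++ v)) (hu : u ≠ []) (hv : v ≠ []) :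
    u ++ v < v := by
  have hprefix := h.suffix_not_isPrefix hu hv
  have hrot : u ++ v < v ++ u := h.2 u v hu hv rfl
  by_contra hle
  have hne : v ≠ u ++ v := fun heq => hprefix ⟨[], by rw [List.append_nil, ← heq]⟩
  have hlt : v < u ++ v := (not_lt.mp hle).lt_of_ne hne
  rcases exists_eq_append_or_lex_append hlt with ⟨t, -, ht⟩ | happend
  · exact hprefix ⟨t, ht.symm⟩
  · have := happend u []
    rw [List.append_nil] at this
    exact lt_asymm hrot this

theorem isLyndon_iff_lt_suffix :
    IsLyndon w ↔ w ≠ [] ∧ ∀ u v, u ≠ [] → v ≠ [] → w = u ++ v → w < v := by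
  refine ⟨fun h => ⟨h.1, ?_⟩, fun h => ⟨h.1, fun u v hu hv huv => ?_⟩⟩
  · rintro u v hu hv rfl
    exact h.lt_suffix hu hv
  · exact List.Lex.append_right _ u (h.2 u v hu hv huv)

theorem IsLyndon.append_lt_right (hγ : IsLyndon γ) (hβ : β ≠ []) (h : β < γ) :
    β ++ γ < γ := by
  rcases exists_eq_append_or_lex_append h with ⟨t, ht, rfl⟩ | happend
  · exact List.append_left_lt (hγ.lt_suffix hβ ht)
  · have := happend γ []
    rwa [List.append_nil] at this

theorem IsLyndon.append (hβ : IsLyndon β) (hγ : IsLyndon γ) (h : β < γ) :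
    IsLyndon (β ++ γ) := by
  have hlt : β ++ γ < γ := hγ.append_lt_right hβ.1 h
  refine isLyndon_iff_lt_suffix.mpr ⟨List.append_ne_nil_of_left_ne_nil hβ.1 γ, ?_⟩
  intro u v hu hv huv
  rcases List.append_eq_append_iff.mp huv with ⟨s, -, rfl⟩ | ⟨s, rfl, rfl⟩
  · rcases eq_or_ne s [] with rfl | hs
    · exact hlt
    · exact hlt.trans (hγ.lt_suffix hs hv)
  · rcases eq_or_ne s [] with rfl | hs
    · exact hlt
    · have hlen : s.length ≤ (u ++ s).length := (List.suffix_append u s).length_le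
      exact lex_append_of_length_le (hβ.lt_suffix hu hs) hlen γ γ

theorem exists_isLyndon_suffix_le {w : List X} (hw : w ≠ []) :
    ∃ u v, w = u ++ v ∧ IsLyndon v ∧ v ≤ w := by
  by_cases h : IsLyndon w
  · exact ⟨[], w, rfl, h, le_rfl⟩
  · rw [isLyndon_iff_lt_suffix] at h
    push Not at h
    obtain ⟨u, v, hu, hv, rfl, hle⟩ := h hw
    have := List.length_pos_iff.mpr hu
    obtain ⟨p, q, rfl, hq, hqv⟩ := exists_isLyndon_suffix_le hv
    exact ⟨u ++ p, q, (List.append_assoc u p q).symm, hq, hqv.trans hle⟩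
termination_by w.length
decreasing_by simp_all

theorem isLyndon_of_lt_isLyndon_suffix (hw : w ≠ [])
    (h : ∀ u v, u ≠ [] → IsLyndon v → w = u ++ v → w < v) : IsLyndon w := by
  refine isLyndon_iff_lt_suffix.mpr ⟨hw, ?_⟩
  rintro u v hu hv rfl
  obtain ⟨p, q, rfl, hq, hle⟩ := exists_isLyndon_suffix_le hv
  have hup : u ++ p ≠ [] := List.append_ne_nil_of_left_ne_nil hu p
  exact (h (u ++ p) q hup hq (List.append_assoc u p q).symm).trans_le hle

/-- `β` and `γ` form the standard factorization of the word `β ++ γ`: `γ` is its longest proper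
suffix that is a Lyndon word. Properness is encoded by `β ≠ []`. -/
structure IsStandardFactorization (β γ : List X) : Prop where
  left_ne_nil : β ≠ []
  isLyndon_right : IsLyndon γ
  length_le : ∀ δ β', β ++ γ = β' ++ δ → β' ≠ [] → IsLyndon δ → δ.length ≤ γ.length

theorem exists_isStandardFactorization (hw : 2 ≤ w.length) :
    ∃ β γ, w = β ++ γ ∧ IsStandardFactorization β γ := by
  let P : List X × List X → Prop := fun p => w = p.1 ++ p.2 ∧ p.1 ≠ [] ∧ IsLyndon p.2
  have hP : ∃ p, P p := by
    obtain ⟨x, t, rfl⟩ := List.exists_cons_of_length_pos (by omega : 0 < w.length)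
    have ht : t ≠ [] := by
      rintro rfl
      simp at hw
    obtain ⟨u, v, rfl, hv, -⟩ := exists_isLyndon_suffix_le ht
    exact ⟨(x :: u, v), rfl, List.cons_ne_nil x u, hv⟩
  obtain ⟨⟨β, γ⟩, ⟨rfl, hβ, hγ⟩, hmin⟩ :=
    exists_minimalFor_of_wellFoundedLT P (fun p => p.1.length) hP
  refine ⟨β, γ, rfl, hβ, hγ, fun δ β' heq hβ' hδ => ?_⟩
  have hlen := congrArg List.length heq
  have hle : β'.length ≤ β.length → β.length ≤ β'.length :=
    hmin (j := (β', δ)) ⟨heq, hβ', hδ⟩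
  simp only [List.length_append] at hlen
  omega

namespace IsStandardFactorization

theorem lt_right (h : IsStandardFactorization β γ) (hβγ : IsLyndon (β ++ γ)) : β ++ γ < γ :=
  hβγ.lt_suffix h.left_ne_nil h.isLyndon_right.1

theorem left_lt (h : IsStandardFactorization β γ) : β < β ++ γ :=
  lt_append_of_ne_nil β h.isLyndon_right.1

theorem right_le_isLyndon_suffix (h : IsStandardFactorization (u ++ v) γ) (hu : u ≠ [])
    (hv : IsLyndon v) : γ ≤ v := by
  by_contra hlt
  have hvγ : IsLyndon (v ++ γ) := hv.append h.isLyndon_right (not_le.mp hlt)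
  have hlen := h.length_le (v ++ γ) u (List.append_assoc u v γ) hu hvγ
  have := List.length_pos_iff.mpr hv.1
  rw [List.length_append] at hlen
  omega

theorem isLyndon_left (h : IsStandardFactorization β γ) (hβγ : IsLyndon (β ++ γ)) :
    IsLyndon β := by
  refine isLyndon_of_lt_isLyndon_suffix h.left_ne_nil ?_
  rintro u v hu hv rfl
  exact (h.left_lt.trans (h.lt_right hβγ)).trans_le (h.right_le_isLyndon_suffix hu hv)

end IsStandardFactorization

theorem IsLyndon.eq_singleton_or_eq_append (h : IsLyndon w) :
    (∃ x, w = [x]) ∨ ∃ β γ, IsLyndon β ∧ IsLyndon γ ∧ β < γ ∧ w = β ++ γ := by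
  rcases Nat.lt_or_ge w.length 2 with hlen | hlen
  · have := List.length_pos_iff.mpr h.1
    exact .inl (List.length_eq_one_iff.mp (by omega))
  · obtain ⟨β, γ, rfl, hfact⟩ := exists_isStandardFactorization hlen
    exact .inr ⟨β, γ, hfact.isLyndon_left h, hfact.isLyndon_right,
      hfact.left_lt.trans (hfact.lt_right h), rfl⟩

end Lyndon

theorem stmt_0 {X : Type*} [LinearOrder X] :
    (∀ α : List X, IsLyndon α ↔
      ((∃ x : X, α = [x]) ∨
        ∃ β γ : List X, IsLyndon β ∧ IsLyndon γ ∧ List.Lex (· < ·) β γ ∧ α = β ++ γ)) ∧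
    (∀ α β γ : List X, IsLyndon α → 2 ≤ α.length → α = β ++ γ → β ≠ [] → IsLyndon γ →
      (∀ δ β' : List X, α = β' ++ δ → β' ≠ [] → IsLyndon δ → δ.length ≤ γ.length) →
      IsLyndon β ∧ List.Lex (· < ·) β α ∧ List.Lex (· < ·) α γ) := by
  refine ⟨fun α => ⟨IsLyndon.eq_singleton_or_eq_append, ?_⟩, ?_⟩
  · rintro (⟨x, rfl⟩ | ⟨β, γ, hβ, hγ, hlt, rfl⟩)
    · exact isLyndon_singleton x
    · exact hβ.append hγ hlt
  · rintro _ β γ hβγ - rfl hβ hγ hmax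
    have hfact : IsStandardFactorization β γ := ⟨hβ, hγ, hmax⟩
    exact ⟨hfact.isLyndon_left hβγ, hfact.left_lt, hfact.lt_right hβγ⟩
end

section
/- Every nonempty word w over a linearly ordered alphabet X can be written in exactly one way as a concatenation w = β₁β₂⋯βₙ of Lyndon words satisfying β₁ ⪰ β₂ ⪰ ⋯ ⪰ βₙ; that is, there is a unique list (β₁, …, βₙ) of Lyndon words, nonincreasing in the lexicographic order, whose concatenation is w (Chen–Fox–Lyndon factorization). -/
/-!
A word is Lyndon if and only if it is its own least nonempty suffix. Consequently the last factor
of a nonincreasing Lyndon factorization of `w` is forced to be the least nonempty suffix `b` of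
`w`: every nonempty suffix of `w` begins with a nonempty suffix of some factor `d`, hence is at
least `d ≥ b`. Splitting off least nonempty suffixes from the right therefore gives uniqueness. It
also gives existence, because a least suffix is Lyndon and, for Lyndon `b`, the inequality `c < b`
would imply `c ++ b < b`, so that successive least suffixes do not increase from left to right.
-/

section Lexicographic

variable {X : Type*}

theorem append_lt_append_of_lt_of_not_isPrefix [LT X] {u v : List X} (h : u < v)
    (hp : ¬ u <+: v) (s t : List X) : u ++ s < v ++ t := by
  induction h with
  | nil => exact absurd List.nil_prefix hp
  | rel hab => exact .rel hab
  | cons _ ih => exact .cons (ih fun huv => hp (List.cons_prefix_cons.2 ⟨rfl, huv⟩))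

theorem append_lt_append_iff_left [LT X] [Std.Irrefl (· < · : X → X → Prop)] (a : List X)
    {u v : List X} : a ++ u < a ++ v ↔ u < v := by
  induction a with
  | nil => rfl
  | cons _ _ ih => rwa [List.cons_append, List.cons_append, List.cons_lt_cons_self]

-- `List.le_append_left` is about `List.instLE`, not about the order of `LinearOrder (List X)`.
theorem self_le_append [LinearOrder X] (u s : List X) : u ≤ u ++ s :=
  not_lt.1 List.le_append_left

theorem self_lt_append [LinearOrder X] (u : List X) {s : List X} (hs : s ≠ []) :
    u < u ++ s :=
  (self_le_append u s).lt_of_ne fun h => hs (List.self_eq_append_right.1 h)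

end Lexicographic

section Suffixes

variable {X : Type*}

/-- The set of nonempty suffixes of `w`, including `w` itself when `w ≠ []`. Its least element is
the last factor of the Lyndon factorization of `w`. -/
def nonemptySuffixes (w : List X) : Set (List X) :=
  {s | s <:+ w ∧ s ≠ []}

theorem self_mem_nonemptySuffixes {w : List X} (hw : w ≠ []) : w ∈ nonemptySuffixes w :=
  ⟨List.suffix_rfl, hw⟩

theorem finite_nonemptySuffixes (w : List X) : (nonemptySuffixes w).Finite :=
  w.tails.finite_toSet.subset fun _ hs => (List.mem_tails _ _).2 hs.1

theorem nonemptySuffixes_append (u v : List X) :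
    nonemptySuffixes (u ++ v) = nonemptySuffixes v ∪ (· ++ v) '' nonemptySuffixes u := by
  ext s
  constructor
  · rintro ⟨⟨p, hp⟩, hs⟩
    rcases List.append_eq_append_iff.1 hp with ⟨t, rfl, rfl⟩ | ⟨t, rfl, rfl⟩
    · rcases eq_or_ne t [] with rfl | ht
      · exact .inl ⟨List.suffix_rfl, hs⟩
      · exact .inr ⟨t, ⟨List.suffix_append p t, ht⟩, rfl⟩
    · exact .inl ⟨List.suffix_append t s, hs⟩
  · rintro (⟨hsv, hs⟩ | ⟨t, ⟨htu, ht⟩, rfl⟩)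
    · exact ⟨hsv.trans (List.suffix_append u v), hs⟩
    · exact ⟨List.suffix_append_self_iff.2 htu, List.append_ne_nil_of_left_ne_nil ht v⟩

theorem exists_isLeast_nonemptySuffixes [LinearOrder X] {w : List X} (hw : w ≠ []) :
    ∃ b, IsLeast (nonemptySuffixes w) b := by
  obtain ⟨b, hb⟩ := (finite_nonemptySuffixes w).exists_minimal ⟨w, self_mem_nonemptySuffixes hw⟩
  exact ⟨b, minimal_iff_isLeast.1 hb⟩

end Suffixes

section Lyndon

variable {X : Type*} [LinearOrder X]

theorem IsLyndon.le_of_mem_nonemptySuffixes {w s : List X} (hw : IsLyndon w)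
    (hs : s ∈ nonemptySuffixes w) : w ≤ s := by
  obtain ⟨⟨u, rfl⟩, hs⟩ := hs
  rcases eq_or_ne u [] with rfl | hu
  · exact le_rfl
  by_contra! hlt
  have lt_rotation : u ++ s < s ++ u := hw.2 u s hu hs rfl
  by_cases hp : s <+: u ++ s
  · obtain ⟨t, ht⟩ := hp
    have length_eq : t.length = u.length := by
      have := congrArg List.length ht
      simp only [List.length_append] at this
      omega
    have t_lt_u : t < u := by rwa [← ht, append_lt_append_iff_left] at lt_rotation
    have t_not_prefix : ¬ t <+: u := fun h => t_lt_u.ne (h.eq_of_length length_eq)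
    have ht_nil : t ≠ [] := by
      rintro rfl
      exact hu (List.eq_nil_of_length_eq_zero length_eq.symm)
    have lt_rotation' : u ++ s < t ++ s := hw.2 s t hs ht_nil ht.symm
    exact lt_asymm lt_rotation' (append_lt_append_of_lt_of_not_isPrefix t_lt_u t_not_prefix s s)
  · have := append_lt_append_of_lt_of_not_isPrefix hlt hp u []
    rw [List.append_nil] at this
    exact lt_asymm lt_rotation this

theorem isLyndon_iff_isLeast_nonemptySuffixes {w : List X} :
    IsLyndon w ↔ IsLeast (nonemptySuffixes w) w := by
  constructor
  · exact fun hw => ⟨self_mem_nonemptySuffixes hw.1, fun _ => hw.le_of_mem_nonemptySuffixes⟩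
  · rintro ⟨⟨-, hw⟩, hmin⟩
    refine ⟨hw, fun u v hu hv h => ?_⟩
    have w_le_v : w ≤ v := hmin ⟨⟨u, h.symm⟩, hv⟩
    exact w_le_v.trans_lt (self_lt_append v hu)

theorem isLyndon_of_isLeast_nonemptySuffixes {w b : List X}
    (hb : IsLeast (nonemptySuffixes w) b) : IsLyndon b :=
  isLyndon_iff_isLeast_nonemptySuffixes.2
    ⟨self_mem_nonemptySuffixes hb.1.2, fun _ hs => hb.2 ⟨hs.1.trans hb.1.1, hs.2⟩⟩

theorem IsLyndon.append_lt_of_lt {u v : List X} (hv : IsLyndon v) (hu : u ≠ []) (h : u < v) :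
    u ++ v < v := by
  by_cases hp : u <+: v
  · obtain ⟨t, rfl⟩ := hp
    have ht : t ≠ [] := by
      rintro rfl
      simp at h
    have le_t : u ++ t ≤ t := hv.le_of_mem_nonemptySuffixes ⟨List.suffix_append u t, ht⟩
    have ne_t : u ++ t ≠ t := mt List.append_left_eq_self.1 hu
    exact (append_lt_append_iff_left u).2 (le_t.lt_of_ne ne_t)
  · simpa only [List.append_nil] using append_lt_append_of_lt_of_not_isPrefix h hp v []

theorem exists_mem_le_of_mem_nonemptySuffixes_flatten {L : List (List X)} {s : List X}
    (hL : ∀ β ∈ L, IsLyndon β) (hs : s ∈ nonemptySuffixes L.flatten) : ∃ β ∈ L, β ≤ s := by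
  induction L with
  | nil => exact absurd (List.suffix_nil.1 hs.1) hs.2
  | cons d L ih =>
    rw [List.flatten_cons, nonemptySuffixes_append] at hs
    rw [List.forall_mem_cons] at hL
    rcases hs with hs | ⟨t, ht, rfl⟩
    · obtain ⟨β, hβ, hle⟩ := ih hL.2 hs
      exact ⟨β, List.mem_cons_of_mem d hβ, hle⟩
    · exact ⟨d, List.mem_cons_self,
        (hL.1.le_of_mem_nonemptySuffixes ht).trans (self_le_append t _)⟩

end Lyndon

/-- `L` is a Chen–Fox–Lyndon factorization of `w`: its entries are Lyndon words, they do not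
increase from left to right, and their concatenation is `w`. -/
structure IsLyndonFactorization {X : Type*} [LinearOrder X] (w : List X) (L : List (List X)) :
    Prop where
  isLyndon : ∀ β ∈ L, IsLyndon β
  sortedGE : L.SortedGE
  flatten_eq : L.flatten = w

namespace IsLyndonFactorization

variable {X : Type*} [LinearOrder X] {u w b : List X} {L M : List (List X)}

theorem isLeast_last (h : IsLyndonFactorization w (L ++ [b])) :
    IsLeast (nonemptySuffixes w) b := by
  have last_le : ∀ β ∈ L ++ [b], b ≤ β := by
    have := (List.pairwise_append.1 h.sortedGE.pairwise).2.2
    simpa [or_imp, forall_and] using this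
  refine ⟨⟨⟨L.flatten, by simp [← h.flatten_eq]⟩, (h.isLyndon b (by simp)).1⟩, fun s hs => ?_⟩
  obtain ⟨β, hβ, hle⟩ := exists_mem_le_of_mem_nonemptySuffixes_flatten h.isLyndon
    (h.flatten_eq.symm ▸ hs)
  exact (last_le β hβ).trans hle

theorem of_append_singleton (h : IsLyndonFactorization (u ++ b) (L ++ [b])) :
    IsLyndonFactorization u L where
  isLyndon β hβ := h.isLyndon β (List.mem_append_left _ hβ)
  sortedGE := (List.pairwise_append.1 h.sortedGE.pairwise).1.sortedGE
  flatten_eq := by simpa using h.flatten_eq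

theorem append_singleton (h : IsLyndonFactorization u L)
    (hb : IsLeast (nonemptySuffixes (u ++ b)) b) :
    IsLyndonFactorization (u ++ b) (L ++ [b]) where
  isLyndon β hβ := by
    rcases List.mem_append.1 hβ with hβ | hβ
    · exact h.isLyndon β hβ
    · rw [List.mem_singleton.1 hβ]
      exact isLyndon_of_isLeast_nonemptySuffixes hb
  sortedGE := by
    refine (h.sortedGE.isChain.append (List.isChain_singleton b) ?_).sortedGE
    rintro c hc _ ⟨⟩
    obtain ⟨K, rfl⟩ := List.getLast?_eq_some_iff.1 hc
    have hcu : c ∈ nonemptySuffixes u := h.isLeast_last.1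
    have le_append : b ≤ c ++ b := hb.2 <| by
      rw [nonemptySuffixes_append]
      exact .inr ⟨c, hcu, rfl⟩
    exact not_lt.1 fun hlt =>
      le_append.not_gt ((isLyndon_of_isLeast_nonemptySuffixes hb).append_lt_of_lt hcu.2 hlt)
  flatten_eq := by simp [h.flatten_eq]

theorem eq_nil_iff (h : IsLyndonFactorization w L) : w = [] ↔ L = [] := by
  rw [← h.flatten_eq, List.flatten_eq_nil_iff]
  constructor
  · exact fun hnil => List.eq_nil_iff_forall_not_mem.2 fun β hβ => (h.isLyndon β hβ).1 (hnil β hβ)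
  · rintro rfl
    exact List.forall_mem_nil _

protected theorem unique (hL : IsLyndonFactorization w L) (hM : IsLyndonFactorization w M) :
    L = M := by
  induction L using List.reverseRecOn generalizing w M with
  | nil => exact (hM.eq_nil_iff.1 (hL.eq_nil_iff.2 rfl)).symm
  | append_singleton L b ih =>
    have hM_nil : M ≠ [] := by
      rw [Ne, ← hM.eq_nil_iff, hL.eq_nil_iff]
      simp
    obtain ⟨M, c, rfl⟩ := (List.eq_nil_or_concat' M).resolve_left hM_nil
    obtain rfl : b = c := hL.isLeast_last.unique hM.isLeast_last
    obtain ⟨u, rfl⟩ := hL.isLeast_last.1.1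
    rw [ih hL.of_append_singleton hM.of_append_singleton]

end IsLyndonFactorization

theorem exists_isLyndonFactorization {X : Type*} [LinearOrder X] (w : List X) :
    ∃ L, IsLyndonFactorization w L := by
  rcases eq_or_ne w [] with rfl | hw
  · exact ⟨[], List.forall_mem_nil _, List.Pairwise.nil.sortedGE, rfl⟩
  obtain ⟨b, hb⟩ := exists_isLeast_nonemptySuffixes hw
  obtain ⟨u, hu⟩ := hb.1.1
  have length_lt : u.length < w.length := by
    rw [← hu, List.length_append]
    exact Nat.lt_add_of_pos_right (List.length_pos_iff.2 hb.1.2)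
  obtain ⟨L, hL⟩ := exists_isLyndonFactorization u
  subst hu
  exact ⟨L ++ [b], hL.append_singleton hb⟩
termination_by w.length

theorem isLyndonFactorization_iff {X : Type*} [LinearOrder X] {w : List X} {L : List (List X)} :
    IsLyndonFactorization w L ↔
      (∀ β ∈ L, IsLyndon β) ∧
        L.IsChain (fun a b => ¬ List.Lex (· < ·) a b) ∧ L.flatten = w := by
  have sortedGE_iff : L.SortedGE ↔ L.IsChain (fun a b => ¬ List.Lex (· < ·) a b) := by
    simp only [List.sortedGE_iff_isChain, ge_iff_le, ← not_lt]
    rfl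
  rw [← sortedGE_iff]
  exact ⟨fun h => ⟨h.1, h.2, h.3⟩, fun h => ⟨h.1, h.2.1, h.2.2⟩⟩

/-- Chen–Fox–Lyndon: every nonempty word factors uniquely as a nonincreasing
concatenation of Lyndon words. -/
theorem stmt_1 {X : Type*} [LinearOrder X] (w : List X) (hw : w ≠ []) :
    ∃! L : List (List X),
      (∀ β ∈ L, IsLyndon β) ∧
        L.Chain' (fun a b => ¬ List.Lex (· < ·) a b) ∧ L.flatten = w := by
  obtain ⟨L, hL⟩ := exists_isLyndonFactorization w
  exact ⟨L, isLyndonFactorization_iff.1 hL,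
    fun _ hM => (isLyndonFactorization_iff.2 hM).unique hL⟩
end
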